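/- There exists a constant C > 0, independent of k, such that for every f in the Fock space F²(ℂ), every k ∈ ℕ, and every z ∈ ℂ, the k-th derivative satisfies |f^{(k)}(z)| ≤ C · k! · (1+|z|)^k · e^{|z|²/2} · ‖f‖_{F²}. -/

import Mathlib

open MeasureTheory Complex Real Filter
open scoped Nat

/-- The Gaussian-weighted square integrand for the Fock space. -/
noncomputable def fockIntegrand (f : ℂ → ℂ) (z : ℂ) : ℝ := ‖f z‖ ^ 2 * Real.exp (-‖z‖ ^ 2)

/-- The squared Fock norm: π⁻¹ ∫ |f|² e^{-|z|²} dV. -/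
noncomputable def fockNormSq (f : ℂ → ℂ) : ℝ := π⁻¹ * ∫ z : ℂ, fockIntegrand f z

/-- Membership in the Fock space F²(ℂ): entire and Gaussian square-integrable. -/
def MemFock (f : ℂ → ℂ) : Prop := Differentiable ℂ f ∧ Integrable (fockIntegrand f)

/-!
A measure on a complex normed space that is invariant under the circle action `v ↦ e^{iθ} v` can be
averaged over the circle, so it inherits the sub-mean value property of `‖g‖` for entire `g`.
Applied to `g = f ^ 2` and the Gaussian probability measure this gives `|f(0)| ≤ ‖f‖`. The Weyl
translations act isometrically on the Fock space and move this estimate to every point, where it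
reads `|f(w)| ≤ e^{|w|²/2} ‖f‖`. Cauchy's estimate on the circle of radius `(1 + |z|)⁻¹` about `z`
concludes, because `|w|²` exceeds `|z|²` by at most `2` on that circle.
-/

section SubMeanValue

variable {V E : Type*} [NormedAddCommGroup V] [NormedSpace ℂ V]
  [NormedAddCommGroup E] [NormedSpace ℂ E] [CompleteSpace E] {g : V → E}

theorem enorm_apply_zero_le_laverage_circle (hg : Differentiable ℂ g) (v : V) :
    ‖g 0‖ₑ ≤ ⨍⁻ θ in Set.uIoc 0 (2 * π), ‖g (Circle.exp θ • v)‖ₑ ∂volume := by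
  have hline : Differentiable ℂ fun u : ℂ => g (u • v) := by fun_prop
  have hmean : ⨍ θ in 0..2 * π, g (Circle.exp θ • v) = g 0 := by
    have := hline.diffContOnCl.circleAverage (c := 0) (R := 1)
    rwa [circleAverage_eq_intervalAverage, zero_smul,
      show circleMap 0 1 = fun θ => (Circle.exp θ : ℂ) by ext θ; simp [circleMap]] at this
  rw [← hmean]
  exact enorm_integral_le_lintegral_enorm _

theorem enorm_apply_zero_mul_measure_univ_le_lintegral [MeasurableSpace V] [BorelSpace V]
    {μ : Measure V} [SFinite μ] [SMulInvariantMeasure Circle V μ] (hg : Differentiable ℂ g) :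
    ‖g 0‖ₑ * μ Set.univ ≤ ∫⁻ v, ‖g v‖ₑ ∂μ := by
  have hmeas : Measurable fun p : V × ℝ => ‖g (Circle.exp p.2 • p.1)‖ₑ := by
    have := hg.continuous
    exact Continuous.measurable (by fun_prop)
  have hrot (θ : ℝ) : ∫⁻ v, ‖g (Circle.exp θ • v)‖ₑ ∂μ = ∫⁻ v, ‖g v‖ₑ ∂μ :=
    (measurePreserving_smul (Circle.exp θ) μ).lintegral_comp hg.continuous.enorm.measurable
  calc ‖g 0‖ₑ * μ Set.univ = ∫⁻ _, ‖g 0‖ₑ ∂μ := (lintegral_const _).symm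
    _ ≤ ∫⁻ v, ⨍⁻ θ in Set.uIoc 0 (2 * π), ‖g (Circle.exp θ • v)‖ₑ ∂volume ∂μ :=
      lintegral_mono fun v => enorm_apply_zero_le_laverage_circle hg v
    _ = ⨍⁻ θ in Set.uIoc 0 (2 * π), ∫⁻ v, ‖g (Circle.exp θ • v)‖ₑ ∂μ ∂volume :=
      lintegral_lintegral_swap hmeas.aemeasurable
    _ = ∫⁻ v, ‖g v‖ₑ ∂μ := by
      simp only [hrot]
      exact setLAverage_const (by simp [Real.pi_pos.ne']) (by simp [Set.uIoc]) _

end SubMeanValue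

theorem smulInvariantMeasure_withDensity {G α : Type*} [SMul G α] [MeasurableSpace α]
    [MeasurableConstSMul G α] {μ : Measure α} [SMulInvariantMeasure G α μ] {w : α → ENNReal}
    (hw : Measurable w) (hinv : ∀ (c : G) (x : α), w (c • x) = w x) :
    SMulInvariantMeasure G α (μ.withDensity w) where
  measure_preimage_smul c s hs := by
    rw [withDensity_apply _ hs, withDensity_apply _ (measurable_const_smul c hs),
      ← (measurePreserving_smul c μ).setLIntegral_comp_preimage hs hw]
    simp only [hinv]

instance smulInvariantMeasure_circle_volume : SMulInvariantMeasure Circle ℂ volume where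
  measure_preimage_smul u _ hs :=
    (rotation u).measurePreserving.measure_preimage hs.nullMeasurableSet

/-- The Gaussian probability measure `π⁻¹ e^{-|z|²} dV` on `ℂ`; the Fock space is the space of
entire functions in its `L²`. -/
noncomputable def fockGaussian : Measure ℂ :=
  volume.withDensity fun z => ENNReal.ofReal (π⁻¹ * Real.exp (-‖z‖ ^ 2))

instance smulInvariantMeasure_circle_fockGaussian :
    SMulInvariantMeasure Circle ℂ fockGaussian :=
  smulInvariantMeasure_withDensity (by fun_prop) fun u z => by rw [Circle.norm_smul]

theorem fockIntegrand_nonneg (f : ℂ → ℂ) (z : ℂ) : 0 ≤ fockIntegrand f z := by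
  unfold fockIntegrand
  positivity

theorem lintegral_fockGaussian_enorm_sq {f : ℂ → ℂ} (hf : Integrable (fockIntegrand f)) :
    ∫⁻ z, ‖f z‖ₑ ^ 2 ∂fockGaussian = ENNReal.ofReal (fockNormSq f) := by
  rw [fockGaussian, lintegral_withDensity_eq_lintegral_mul_non_measurable _ (by fun_prop)
      (ae_of_all _ fun _ => ENNReal.ofReal_lt_top),
    fockNormSq, ← integral_const_mul, ofReal_integral_eq_lintegral_ofReal (hf.const_mul _)
      (ae_of_all _ fun z => mul_nonneg (by positivity) (fockIntegrand_nonneg f z))]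
  refine lintegral_congr fun z => ?_
  rw [Pi.mul_apply, ← ofReal_norm, ← ENNReal.ofReal_pow (norm_nonneg _),
    ← ENNReal.ofReal_mul (by positivity), fockIntegrand]
  congr 1
  ring

theorem integral_exp_neg_norm_sq : ∫ z : ℂ, Real.exp (-‖z‖ ^ 2) = π := by
  simpa using GaussianFourier.integral_rexp_neg_mul_sq_norm (V := ℂ) one_pos

instance isProbabilityMeasure_fockGaussian : IsProbabilityMeasure fockGaussian where
  measure_univ := by
    have hexp : fockIntegrand 1 = fun z => Real.exp (-‖z‖ ^ 2) := by
      ext z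
      simp [fockIntegrand]
    have hint : Integrable (fockIntegrand 1) := by
      rw [hexp]
      exact .of_integral_ne_zero (integral_exp_neg_norm_sq ▸ Real.pi_ne_zero)
    have hnorm : fockNormSq 1 = 1 := by
      rw [fockNormSq, hexp, integral_exp_neg_norm_sq, inv_mul_cancel₀ Real.pi_ne_zero]
    simpa [hnorm] using lintegral_fockGaussian_enorm_sq hint

theorem fockNormSq_nonneg (f : ℂ → ℂ) : 0 ≤ fockNormSq f :=
  mul_nonneg (by positivity) (integral_nonneg (fockIntegrand_nonneg f))

theorem MemFock.norm_apply_zero_le {f : ℂ → ℂ} (hf : MemFock f) : ‖f 0‖ ≤ √(fockNormSq f) := by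
  have h := enorm_apply_zero_mul_measure_univ_le_lintegral (μ := fockGaussian) (hf.1.pow 2)
  simp only [Pi.pow_apply, enorm_pow, measure_univ, mul_one,
    lintegral_fockGaussian_enorm_sq hf.2] at h
  rw [← ofReal_norm, ← ENNReal.ofReal_pow (norm_nonneg _),
    ENNReal.ofReal_le_ofReal_iff (fockNormSq_nonneg f)] at h
  exact Real.le_sqrt_of_sq_le h

/-- The Weyl translation `(W_w f)(ζ) = e^{-w̄ζ - |w|²/2} f(w + ζ)`: the translation by `w`,
corrected by the exponential factor that makes it an isometry of the Fock space. -/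
noncomputable def weylTranslate (w : ℂ) (f : ℂ → ℂ) (ζ : ℂ) : ℂ :=
  Complex.exp (-(starRingEnd ℂ w * ζ) - (‖w‖ ^ 2 / 2 : ℝ)) * f (w + ζ)

theorem fockIntegrand_weylTranslate (w : ℂ) (f : ℂ → ℂ) (ζ : ℂ) :
    fockIntegrand (weylTranslate w f) ζ = fockIntegrand f (w + ζ) := by
  have hsq : ‖w + ζ‖ ^ 2 = ‖w‖ ^ 2 + 2 * (starRingEnd ℂ w * ζ).re + ‖ζ‖ ^ 2 := by
    rw [norm_add_sq_real, Complex.inner, mul_comm ζ]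
  simp only [fockIntegrand, weylTranslate, norm_mul, Complex.norm_exp, mul_pow, sub_re, neg_re,
    ofReal_re]
  rw [mul_right_comm, ← Real.exp_nat_mul, ← Real.exp_add, mul_comm, hsq]
  congr 2
  push_cast
  ring

theorem MemFock.weylTranslate {f : ℂ → ℂ} (hf : MemFock f) (w : ℂ) :
    MemFock (weylTranslate w f) := by
  obtain ⟨hdiff, hint⟩ := hf
  refine ⟨?_, ?_⟩
  · unfold _root_.weylTranslate
    fun_prop
  · simpa only [funext (fockIntegrand_weylTranslate w f)] using hint.comp_add_left w

theorem fockNormSq_weylTranslate (w : ℂ) (f : ℂ → ℂ) :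
    fockNormSq (weylTranslate w f) = fockNormSq f := by
  simp only [fockNormSq, fockIntegrand_weylTranslate, integral_add_left_eq_self]

theorem norm_weylTranslate_zero (w : ℂ) (f : ℂ → ℂ) :
    ‖weylTranslate w f 0‖ = Real.exp (-(‖w‖ ^ 2 / 2)) * ‖f w‖ := by
  simp only [weylTranslate, mul_zero, neg_zero, zero_sub, add_zero, norm_mul, Complex.norm_exp,
    neg_re, ofReal_re]

theorem MemFock.norm_apply_le {f : ℂ → ℂ} (hf : MemFock f) (w : ℂ) :
    ‖f w‖ ≤ Real.exp (‖w‖ ^ 2 / 2) * √(fockNormSq f) := by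
  have h := (hf.weylTranslate w).norm_apply_zero_le
  rwa [norm_weylTranslate_zero, fockNormSq_weylTranslate, Real.exp_neg,
    inv_mul_le_iff₀ (Real.exp_pos _)] at h

theorem norm_sq_le_of_mem_sphere_inv {E : Type*} [SeminormedAddCommGroup E] {z w : E}
    (hw : w ∈ Metric.sphere z (1 + ‖z‖)⁻¹) : ‖w‖ ^ 2 ≤ ‖z‖ ^ 2 + 2 := by
  set r := (1 + ‖z‖)⁻¹ with hr
  have hz := norm_nonneg z
  have hwr : ‖w‖ ≤ ‖z‖ + r := norm_le_norm_add_const_of_dist_le hw.le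
  have hr_mul : ‖z‖ * r = 1 - r := by rw [hr]; field_simp; ring
  have hr_nonneg : 0 ≤ r := by positivity
  have hr_le : r ≤ 1 := inv_le_one_of_one_le₀ (by linarith)
  calc ‖w‖ ^ 2 ≤ (‖z‖ + r) ^ 2 := by gcongr
    _ = ‖z‖ ^ 2 + 2 - r * (2 - r) := by linear_combination 2 * hr_mul
    _ ≤ ‖z‖ ^ 2 + 2 := sub_le_self _ (mul_nonneg hr_nonneg (by linarith))

theorem norm_iteratedDeriv_le_of_norm_le_exp_norm_sq {F : Type*} [NormedAddCommGroup F]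
    [NormedSpace ℂ F] [CompleteSpace F] {f : ℂ → F} (hf : Differentiable ℂ f) {A : ℝ}
    (hA : ∀ w, ‖f w‖ ≤ Real.exp (‖w‖ ^ 2 / 2) * A) (k : ℕ) (z : ℂ) :
    ‖iteratedDeriv k f z‖ ≤
      Real.exp 1 * (k ! : ℝ) * (1 + ‖z‖) ^ k * Real.exp (‖z‖ ^ 2 / 2) * A := by
  have hA_nonneg : 0 ≤ A :=
    nonneg_of_mul_nonneg_right ((norm_nonneg _).trans (hA 0)) (Real.exp_pos _)
  have hsphere : ∀ w ∈ Metric.sphere z (1 + ‖z‖)⁻¹,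
      ‖f w‖ ≤ Real.exp (1 + ‖z‖ ^ 2 / 2) * A := fun w hw => by
    refine (hA w).trans ?_
    gcongr
    linarith [norm_sq_le_of_mem_sphere_inv hw]
  calc ‖iteratedDeriv k f z‖
      ≤ (k ! : ℝ) * (Real.exp (1 + ‖z‖ ^ 2 / 2) * A) / (1 + ‖z‖)⁻¹ ^ k :=
        norm_iteratedDeriv_le_of_forall_mem_sphere_norm_le k (by positivity) hf.diffContOnCl hsphere
    _ = Real.exp 1 * (k ! : ℝ) * (1 + ‖z‖) ^ k * Real.exp (‖z‖ ^ 2 / 2) * A := by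
        rw [inv_pow, div_inv_eq_mul, Real.exp_add]
        ring

/-- Pointwise estimate for derivatives of Fock functions, with explicit
dependence of the constant on the order k of differentiation:
|f^{(k)}(z)| ≤ C k! (1+|z|)^k e^{|z|²/2} ‖f‖_{F²}, C independent of k. -/
theorem fock_derivative_estimate :
    ∃ C : ℝ, 0 < C ∧ ∀ f : ℂ → ℂ, MemFock f → ∀ (k : ℕ) (z : ℂ),
      ‖iteratedDeriv k f z‖ ≤
        C * (k ! : ℝ) * (1 + ‖z‖) ^ k * Real.exp (‖z‖ ^ 2 / 2) *
          Real.sqrt (fockNormSq f) :=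
  ⟨Real.exp 1, Real.exp_pos 1, fun _ hf k z =>
    norm_iteratedDeriv_le_of_norm_le_exp_norm_sq hf.1 hf.norm_apply_le k z⟩
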